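/- Let Γ be a finite simplicial graph. Every solvable subgroup of a limit group over 𝔾(Γ) is abelian: if G is a finitely generated group that is fully residually 𝔾(Γ) and S ≤ G is a solvable subgroup, then S is commutative. -/

import Mathlib

/-- The set of commutation relators of a simplicial graph: one commutator
`[u,v]` for each pair of adjacent vertices. -/
def raagRels {V : Type*} (Γ : SimpleGraph V) : Set (FreeGroup V) :=
  {r | ∃ u v : V, Γ.Adj u v ∧
    r = FreeGroup.of u * FreeGroup.of v * (FreeGroup.of u)⁻¹ * (FreeGroup.of v)⁻¹}

/-- The partially commutative group (right-angled Artin group) of a simplicial graph. -/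
abbrev Raag {V : Type*} (Γ : SimpleGraph V) := PresentedGroup (raagRels Γ)

/-- `G` is residually `H`. -/
def Residually (H : Type*) [Group H] (G : Type*) [Group G] : Prop :=
  ∀ g : G, g ≠ 1 → ∃ φ : G →* H, φ g ≠ 1

/-- `G` is fully residually `H`. -/
def FullyResidually (H : Type*) [Group H] (G : Type*) [Group G] : Prop :=
  ∀ s : Finset G, (∀ g ∈ s, g ≠ 1) → ∃ φ : G →* H, ∀ g ∈ s, φ g ≠ 1

/-- A limit group over `H`: finitely generated and fully residually `H`. -/
def IsLimitGroupOver (H : Type*) [Group H] (G : Type*) [Group G] : Prop :=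
  Group.FG G ∧ FullyResidually H G

/-!
Removing a vertex `v` from `Γ` leaves a graph `Γ'`, and the kernel of the map `𝔾(Γ) → 𝔾(Γ')` that
kills `v` is free on the conjugates of `v` by elements of `K = 𝔾(Γ')`. These are indexed by `K ⧸ L`,
where `L` is generated by the neighbours of `v`, so that `𝔾(Γ)` is a semidirect product `F ⋊ K` in
which `K` permutes a basis of the free group `F`. As `L` is a retract of the torsion-free group `K`,
it is closed under taking roots, and hence an element of `K` that preserves a finite set of basis
elements fixes each of them.

Consequently, an element `x = q₀ k` of `F ⋊ K` that permutes a finite set `D ⊆ F` by conjugation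
acts on `D` as some `q ∈ F`: a minimal finite set of basis elements that generates a subgroup
containing `D` up to conjugacy is preserved by `k`, hence fixed pointwise by it. For
`D = {x ^ i * f * x ^ (-i)}`, this reduces torsion-freeness of `F ⋊ K` to that of `F` and `K`. For
`D = {r}`, it reduces commutation in the centraliser of `r ≠ 1` to commutation in `K`. A solvable
subgroup `S` meets `F` in a cyclic group `⟨r⟩`. If `r = 1`, then `S` embeds into `K`. Otherwise `S`
normalises `⟨r⟩` and, by torsion-freeness, centralises `r`.

This is an induction on the number of vertices. It reaches every graph, as each element of `𝔾(Γ)`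
survives in the retract belonging to some finite induced subgraph, and it reaches every group that
is residually `𝔾(Γ)`, as a homomorphism that separates a nontrivial commutator of elements of `S`
from `1` maps `S` onto a nonabelian solvable group.
-/

open scoped commutatorElement

section Group

variable {G K : Type*} [Group G] [Group K]

/-- The group `G` is such that all of its solvable subgroups are abelian. -/
def SolvableSubgroupsAbelian (G : Type*) [Group G] : Prop :=
  ∀ S : Subgroup G, Group.IsSolvable S → ∀ a ∈ S, ∀ b ∈ S, Commute a b

theorem isSolvable_subgroup_map (f : G →* K) (S : Subgroup G) [Group.IsSolvable S] :
    Group.IsSolvable (S.map f) :=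
  Group.isSolvable_of_surjective (f.subgroupMap_surjective S)

theorem SolvableSubgroupsAbelian.of_forall_exists_hom.{v}
    (h : ∀ g : G, g ≠ 1 → ∃ (K : Type v) (_ : Group K) (f : G →* K),
      SolvableSubgroupsAbelian K ∧ f g ≠ 1) :
    SolvableSubgroupsAbelian G := by
  intro S hS a ha b hb
  by_contra hab
  obtain ⟨K, _, f, hK, hf⟩ := h ⁅a, b⁆ (mt commutatorElement_eq_one_iff_commute.mp hab)
  refine hf ?_
  rw [map_commutatorElement, commutatorElement_eq_one_iff_commute]
  exact hK _ (isSolvable_subgroup_map f S) _ (S.mem_map_of_mem f ha) _ (S.mem_map_of_mem f hb)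

theorem SolvableSubgroupsAbelian.of_injective (hK : SolvableSubgroupsAbelian K) {f : G →* K}
    (hf : Function.Injective f) : SolvableSubgroupsAbelian G :=
  .of_forall_exists_hom fun _ hg => ⟨K, _, f, hK, (map_ne_one_iff f hf).mpr hg⟩

theorem mul_pow_mul_inv_pow_eq_of_conj_pow_eq {f x q : G}
    (h : ∀ i : ℕ, MulAut.conj (x ^ i) f = MulAut.conj (q ^ i) f) (n : ℕ) :
    (f * x) ^ n * (x ^ n)⁻¹ = (f * q) ^ n * (q ^ n)⁻¹ := by
  induction n with
  | zero => simp
  | succ n ih =>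
    have peel (y : G) : (f * y) ^ (n + 1) * (y ^ (n + 1))⁻¹ =
        (f * y) ^ n * (y ^ n)⁻¹ * MulAut.conj (y ^ n) f := by
      rw [MulAut.conj_apply, pow_succ, pow_succ]
      group
    rw [peel, peel, ih, h]

theorem conj_pow_eq_conj_mul_inv_pow {f x t : G} (h : ∀ i : ℕ, Commute t (MulAut.conj (x ^ i) f))
    (i : ℕ) : MulAut.conj (x ^ i) f = MulAut.conj ((x * t⁻¹) ^ i) f := by
  induction i with
  | zero => simp
  | succ i ih =>
    have ht : MulAut.conj t⁻¹ (MulAut.conj (x ^ i) f) = MulAut.conj (x ^ i) f :=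
      mul_inv_eq_of_eq_mul (h i).inv_left.eq
    rw [pow_succ', pow_succ', map_mul, map_mul, MulAut.mul_apply, MulAut.mul_apply, ← ih,
      map_mul, MulAut.mul_apply, ht]

theorem finite_range_conj_pow {f x : G} {n : ℕ} (hn : n ≠ 0) (h : Commute (x ^ n) f) :
    (Set.range fun i : ℕ => MulAut.conj (x ^ i) f).Finite := by
  refine ((Set.finite_Iio n).image fun i => MulAut.conj (x ^ i) f).subset ?_
  rintro _ ⟨i, rfl⟩
  refine ⟨i % n, Nat.mod_lt _ (Nat.pos_of_ne_zero hn), ?_⟩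
  have hfix : MulAut.conj ((x ^ n) ^ (i / n)) f = f :=
    mul_inv_eq_of_eq_mul (h.pow_left _).eq
  change _ = MulAut.conj (x ^ i) f
  conv_rhs => rw [← Nat.mod_add_div i n, pow_add, pow_mul, map_mul, MulAut.mul_apply, hfix]

end Group

section TorsionFree

variable {G : Type*} [Group G] [IsMulTorsionFree G] {r s x y : G}

theorem commute_of_commute_zpow {n : ℤ} (hn : n ≠ 0) (h : Commute x (y ^ n)) : Commute x y := by
  refine mul_inv_eq_iff_eq_mul.mp (zpow_left_injective hn ?_)
  simpa only [conj_zpow] using mul_inv_eq_of_eq_mul h.eq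

theorem eq_one_of_conj_eq_inv (h : s * r * s⁻¹ = r⁻¹) : r = 1 := by
  have hsr : s * r = r⁻¹ * s := mul_inv_eq_iff_eq_mul.mp h
  have hsq : (r * s) ^ 2 = s ^ 2 := by
    calc (r * s) ^ 2 = r * (s * r) * s := by rw [pow_two]; group
      _ = s ^ 2 := by rw [hsr, pow_two]; group
  exact mul_eq_right.mp (pow_left_injective two_ne_zero hsq)

theorem commute_of_conj_mem_zpowers (h : s * r * s⁻¹ ∈ Subgroup.zpowers r)
    (h' : s⁻¹ * r * s ∈ Subgroup.zpowers r) : Commute s r := by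
  rcases eq_or_ne r 1 with rfl | hr
  · exact Commute.one_right s
  have hgen : Subgroup.zpowers r = Subgroup.zpowers (s * r * s⁻¹) := by
    refine le_antisymm (Subgroup.zpowers_le.mpr ?_) (Subgroup.zpowers_le.mpr h)
    obtain ⟨k, hk⟩ := Subgroup.mem_zpowers_iff.mp h'
    refine Subgroup.mem_zpowers_iff.mpr ⟨k, ?_⟩
    rw [conj_zpow, hk]
    group
  rcases (Subgroup.zpowers_eq_zpowers_iff (not_isOfFinOrder_of_isMulTorsionFree hr)).mp hgen with
    hconj | hconj
  · exact mul_inv_eq_iff_eq_mul.mp hconj.symm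
  · exact absurd (eq_one_of_conj_eq_inv hconj.symm) hr

end TorsionFree

section FreeGroup

variable {Ω : Type*}

theorem subsingleton_of_isSolvable_freeGroup [Group.IsSolvable (FreeGroup Ω)] :
    Subsingleton Ω := by
  classical
  by_contra hΩ
  obtain ⟨a, b, hab⟩ := not_subsingleton_iff_nontrivial.mp hΩ
  let σ : Equiv.Perm (Fin 5) := finRotate 5
  let τ : Equiv.Perm (Fin 5) := Equiv.swap 0 (σ 0)
  let f : FreeGroup Ω →* Equiv.Perm (Fin 5) := FreeGroup.lift fun ω => if ω = a then σ else τ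
  have hf : Function.Surjective f := by
    rw [← MonoidHom.range_eq_top, ← top_le_iff,
      ← Equiv.Perm.closure_cycle_adjacent_swap isCycle_finRotate support_finRotate 0,
      Subgroup.closure_le]
    rintro _ (rfl | rfl)
    · exact ⟨FreeGroup.of a, by simp [f, σ]⟩
    · exact ⟨FreeGroup.of b, by simp [f, σ, τ, hab.symm]⟩
  exact Equiv.Perm.not_isSolvable_fin_5 (Group.isSolvable_of_surjective hf)

theorem isCyclic_freeGroup_of_subsingleton [Subsingleton Ω] : IsCyclic (FreeGroup Ω) := by
  cases isEmpty_or_nonempty Ω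
  · infer_instance
  · have := uniqueOfSubsingleton (Classical.arbitrary Ω)
    infer_instance

theorem isCyclic_of_isFreeGroup_of_isSolvable (F : Type*) [Group F] [IsFreeGroup F]
    [Group.IsSolvable F] : IsCyclic F := by
  let e := IsFreeGroup.toFreeGroup F
  have := Group.isSolvable_of_surjective (f := e.toMonoidHom) e.surjective
  have := subsingleton_of_isSolvable_freeGroup (Ω := IsFreeGroup.Generators F)
  exact e.isCyclic.mpr isCyclic_freeGroup_of_subsingleton

theorem exists_zpow_eq_zpow_of_commute {x y : FreeGroup Ω} (h : Commute x y) (hy : y ≠ 1) :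
    ∃ m n : ℤ, n ≠ 0 ∧ x ^ n = y ^ m := by
  let T := Subgroup.closure {x, y}
  have hT : IsMulCommutative T := Subgroup.isMulCommutative_closure <| by
    rintro _ (rfl | rfl) _ (rfl | rfl)
    exacts [rfl, h.eq, h.eq.symm, rfl]
  have : Group.IsSolvable T := Group.isSolvable_of_comm hT.is_comm.comm
  obtain ⟨t, ht⟩ := (Subgroup.isCyclic_iff_exists_zpowers_eq_top T).mp
    (isCyclic_of_isFreeGroup_of_isSolvable T)
  obtain ⟨i, hi⟩ : x ∈ Subgroup.zpowers t := ht ▸ Subgroup.subset_closure (by simp)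
  obtain ⟨j, hj⟩ : y ∈ Subgroup.zpowers t := ht ▸ Subgroup.subset_closure (by simp)
  refine ⟨i, j, ?_, ?_⟩
  · rintro rfl
    exact hy (by simpa using hj.symm)
  · rw [← hi, ← hj]
    exact zpow_comm t i j

/-- The retraction of a free group onto the subgroup freely generated by the basis elements in
`A`, seen as an endomorphism; it kills the other basis elements. -/
noncomputable def freeRetract (A : Set Ω) : FreeGroup Ω →* FreeGroup Ω :=
  FreeGroup.lift (A.mulIndicator FreeGroup.of)

theorem freeRetract_of_mem {A : Set Ω} {ω : Ω} (hω : ω ∈ A) :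
    freeRetract A (FreeGroup.of ω) = FreeGroup.of ω := by
  simp [freeRetract, hω]

theorem freeRetract_of_notMem {A : Set Ω} {ω : Ω} (hω : ω ∉ A) :
    freeRetract A (FreeGroup.of ω) = 1 := by
  simp [freeRetract, hω]

theorem freeRetract_freeRetract (A B : Set Ω) (x : FreeGroup Ω) :
    freeRetract A (freeRetract B x) = freeRetract (A ∩ B) x := by
  suffices h : (freeRetract A).comp (freeRetract B) = freeRetract (A ∩ B) from
    DFunLike.congr_fun h x
  ext ω
  by_cases hB : ω ∈ B <;> by_cases hA : ω ∈ A <;>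
    simp [freeRetract, hA, hB]

theorem map_freeRetract_preimage (k : Equiv.Perm Ω) (A : Set Ω) (x : FreeGroup Ω) :
    FreeGroup.map k (freeRetract (k ⁻¹' A) x) = freeRetract A (FreeGroup.map k x) := by
  suffices h : (FreeGroup.map k).comp (freeRetract (k ⁻¹' A)) =
      (freeRetract A).comp (FreeGroup.map k) from DFunLike.congr_fun h x
  ext ω
  by_cases hω : k ω ∈ A <;> simp [freeRetract, hω]

theorem map_freeRetract_of_fixed {k : Ω → Ω} {A : Set Ω} (hk : ∀ ω ∈ A, k ω = ω)
    (x : FreeGroup Ω) : FreeGroup.map k (freeRetract A x) = freeRetract A x := by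
  suffices h : (FreeGroup.map k).comp (freeRetract A) = freeRetract A from DFunLike.congr_fun h x
  ext ω
  by_cases hω : ω ∈ A
  · simp [freeRetract, hω, hk]
  · simp [freeRetract, hω]

theorem freeRetract_eq_self_of_subset {A B : Set Ω} (hAB : A ⊆ B) {x : FreeGroup Ω}
    (hx : freeRetract A x = x) : freeRetract B x = x := by
  rw [← hx, freeRetract_freeRetract, Set.inter_eq_right.mpr hAB]

theorem exists_finset_freeRetract_eq_self (x : FreeGroup Ω) :
    ∃ A : Finset Ω, freeRetract A x = x := by
  classical
  induction x using FreeGroup.induction_on with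
  | C1 => exact ⟨∅, map_one _⟩
  | of ω => exact ⟨{ω}, freeRetract_of_mem (by simp)⟩
  | inv_of ω h => exact h.imp fun A hA => by rw [map_inv, hA]
  | mul x y hx hy =>
    obtain ⟨A, hA⟩ := hx
    obtain ⟨B, hB⟩ := hy
    refine ⟨A ∪ B, ?_⟩
    rw [map_mul, freeRetract_eq_self_of_subset (by simp) hA,
      freeRetract_eq_self_of_subset (by simp) hB]

/-- A set `A` of basis elements such that some single conjugation of the free group carries all
of `D` into the subgroup generated by `A`. After multiplying the conjugator by an element of that
subgroup, the conjugate of `d` is `freeRetract A d`, and the definition records this normal form. -/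
def IsConjSupport (D : Set (FreeGroup Ω)) (A : Set Ω) : Prop :=
  ∃ p, ∀ d ∈ D, p * freeRetract A d * p⁻¹ = d

namespace IsConjSupport

variable {D : Set (FreeGroup Ω)} {A B : Set Ω}

theorem inter (hA : IsConjSupport D A) (hB : IsConjSupport D B) : IsConjSupport D (A ∩ B) := by
  obtain ⟨p, hp⟩ := hA
  obtain ⟨q, hq⟩ := hB
  refine ⟨p * freeRetract A q, fun d hd => ?_⟩
  calc p * freeRetract A q * freeRetract (A ∩ B) d * (p * freeRetract A q)⁻¹
      = p * freeRetract A (q * freeRetract B d * q⁻¹) * p⁻¹ := by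
        simp only [map_mul, map_inv, freeRetract_freeRetract]
        group
    _ = d := by rw [hq d hd, hp d hd]

theorem preimage (hA : IsConjSupport D A) (k : Equiv.Perm Ω) (u : FreeGroup Ω)
    (hD : ∀ d ∈ D, u * FreeGroup.map k d * u⁻¹ ∈ D) : IsConjSupport D (k ⁻¹' A) := by
  obtain ⟨p, hp⟩ := hA
  obtain ⟨q, hq⟩ := (FreeGroup.freeGroupCongr k).surjective (u⁻¹ * p * freeRetract A u)
  rw [FreeGroup.freeGroupCongr_apply] at hq
  refine ⟨q, fun d hd => FreeGroup.map_injective k.injective ?_⟩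
  calc FreeGroup.map k (q * freeRetract (k ⁻¹' A) d * q⁻¹)
      = u⁻¹ * (p * freeRetract A (u * FreeGroup.map k d * u⁻¹) * p⁻¹) * u := by
        simp only [map_mul, map_inv, map_freeRetract_preimage, hq]
        group
    _ = FreeGroup.map k d := by
        rw [hp _ (hD d hd)]
        group

theorem exists_finset (hD : D.Finite) : ∃ A : Finset Ω, IsConjSupport D A := by
  classical
  choose A hA using exists_finset_freeRetract_eq_self (Ω := Ω)
  refine ⟨hD.toFinset.biUnion A, 1, fun d hd => ?_⟩
  have hsub : (A d : Set Ω) ⊆ hD.toFinset.biUnion A :=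
    Finset.coe_subset.mpr (Finset.subset_biUnion_of_mem A (hD.mem_toFinset.mpr hd))
  rw [one_mul, inv_one, mul_one, freeRetract_eq_self_of_subset hsub (hA d)]

theorem exists_finset_forall_mapsTo (hD : D.Finite) :
    ∃ A : Finset Ω, IsConjSupport D A ∧ ∀ (k : Equiv.Perm Ω) (u : FreeGroup Ω),
      (∀ d ∈ D, u * FreeGroup.map k d * u⁻¹ ∈ D) → Set.MapsTo k A A := by
  classical
  obtain ⟨A, hA, hmin⟩ :=
    exists_minimal_of_wellFoundedLT (fun A : Finset Ω => IsConjSupport D A) (exists_finset hD)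
  refine ⟨A, hA, fun k u hk ω hω => ?_⟩
  have hB : IsConjSupport D ({ω ∈ A | k ω ∈ A} : Finset Ω) := by
    rw [Finset.coe_filter]
    exact hA.inter (hA.preimage k u hk)
  exact (Finset.mem_filter.mp (hmin hB (Finset.filter_subset _ _) hω)).2

end IsConjSupport

end FreeGroup

section PermSemidirect

open SemidirectProduct

variable {H Ω : Type*} [Group H] [MulAction H Ω]

variable (H Ω) in
/-- The action of `H` on `Ω` has isolated stabilizers if every stabilizer is closed under taking
roots, i.e. if no element has a nontrivial finite cycle on `Ω`. -/
def IsolatedStabilizers : Prop :=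
  ∀ (h : H) (n : ℕ) (ω : Ω), n ≠ 0 → h ^ n • ω = ω → h • ω = ω

theorem IsolatedStabilizers.smul_eq_of_mapsTo (hΩ : IsolatedStabilizers H Ω) {A : Finset Ω} {h : H}
    (hA : Set.MapsTo (h • ·) (A : Set Ω) A) {ω : Ω} (hω : ω ∈ A) : h • ω = ω := by
  have hinj : Function.Injective hA.restrict :=
    hA.restrict_inj.mpr (MulAction.injective h).injOn
  obtain ⟨n, hn, hper⟩ := Function.mem_periodicPts.mp (hinj.mem_periodicPts ⟨ω, hω⟩)
  refine hΩ h n ω hn.ne' ?_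
  simpa [hA.iterate_restrict, smul_iterate] using congrArg Subtype.val hper

variable (H Ω) in
/-- The action of `H` on the free group with basis `Ω` induced by an action on `Ω`. -/
def freeGroupAction : H →* MulAut (FreeGroup Ω) where
  toFun h := FreeGroup.freeGroupCongr (MulAction.toPerm h)
  map_one' := by
    ext x
    rw [MulAction.toPerm_one]
    exact FreeGroup.map.id x
  map_mul' g h := by
    ext x
    rw [MulAut.mul_apply, FreeGroup.freeGroupCongr_apply, FreeGroup.freeGroupCongr_apply,
      FreeGroup.freeGroupCongr_apply, FreeGroup.map.comp]
    exact congrArg (FreeGroup.map · x) (funext (mul_smul g h))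

theorem freeGroupAction_apply (h : H) (x : FreeGroup Ω) :
    freeGroupAction H Ω h x = FreeGroup.map (MulAction.toPerm h) x := rfl

variable (H Ω) in
/-- The semidirect product of the free group with basis `Ω` and of `H`, for the action of `H`
induced by an action on `Ω`. -/
abbrev PermSemidirect := FreeGroup Ω ⋊[freeGroupAction H Ω] H

namespace PermSemidirect

theorem eq_inl_left {x : PermSemidirect H Ω} (hx : x.right = 1) : x = inl x.left := by
  ext <;> simp [hx]

theorem exists_mul_inv_eq_inl {x y : PermSemidirect H Ω} (h : x.right = y.right) :
    ∃ q : FreeGroup Ω, x * y⁻¹ = inl q :=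
  ⟨_, eq_inl_left (by rw [mul_right, inv_right, h, mul_inv_cancel])⟩

theorem conj_inl (x : PermSemidirect H Ω) (d : FreeGroup Ω) :
    x * inl d * x⁻¹ =
      inl (x.left * FreeGroup.map (MulAction.toPerm x.right) d * x.left⁻¹) := by
  rw [← freeGroupAction_apply, map_mul, map_mul, inl_aut, map_inv, map_inv]
  nth_rewrite 1 2 [← inl_left_mul_inr_right x]
  group

theorem commute_inr_inl {h : H} {d : FreeGroup Ω}
    (hd : FreeGroup.map (MulAction.toPerm h) d = d) :
    Commute (inr h : PermSemidirect H Ω) (inl d) :=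
  mul_inv_eq_iff_eq_mul.mp (by rw [← map_inv, ← inl_aut, freeGroupAction_apply, hd])

theorem exists_section_forall_commute (hΩ : IsolatedStabilizers H Ω)
    {D : Set (PermSemidirect H Ω)} (hD : D.Finite) (hright : ∀ d ∈ D, d.right = 1) :
    ∃ σ : H →* PermSemidirect H Ω, (∀ h, (σ h).right = h) ∧ ∀ x : PermSemidirect H Ω,
      (∀ d ∈ D, x * d * x⁻¹ ∈ D) → ∀ d ∈ D, Commute (σ x.right) d := by
  obtain ⟨A, ⟨p, hp⟩, hA⟩ :=
    IsConjSupport.exists_finset_forall_mapsTo (hD.preimage inl_injective.injOn)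
  refine ⟨(MulAut.conj (inl p)).toMonoidHom.comp inr, fun h => by simp, fun x hx d hd => ?_⟩
  have hmaps : Set.MapsTo (x.right • ·) (A : Set Ω) A := by
    refine hA (MulAction.toPerm x.right) x.left fun e he => ?_
    rw [Set.mem_preimage, ← conj_inl]
    exact hx _ he
  have hd' : inl p * inl (freeRetract A d.left) * (inl p)⁻¹ = d := by
    have hmem : d.left ∈ inl ⁻¹' D := by rwa [Set.mem_preimage, ← eq_inl_left (hright d hd)]
    rw [← map_inv, ← map_mul, ← map_mul, hp _ hmem, ← eq_inl_left (hright d hd)]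
  rw [← hd']
  refine (Commute.conj_iff _).mpr (commute_inr_inl (map_freeRetract_of_fixed (fun ω hω => ?_) _))
  exact hΩ.smul_eq_of_mapsTo hmaps hω

theorem isMulTorsionFree [IsMulTorsionFree H] (hΩ : IsolatedStabilizers H Ω) :
    IsMulTorsionFree (PermSemidirect H Ω) := by
  refine ⟨fun n hn x y hxy => ?_⟩
  replace hxy : x ^ n = y ^ n := hxy
  have hright : x.right = y.right := by
    refine pow_left_injective hn ?_
    simpa only [map_pow, rightHom_eq_right] using congrArg rightHom hxy
  obtain ⟨f, hf⟩ := exists_mul_inv_eq_inl hright.symm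
  have hxf : Commute (x ^ n) (inl f) :=
    hf ▸ (hxy ▸ Commute.pow_self y n).mul_right (Commute.pow_self x n).inv_right
  obtain ⟨σ, hσ, hcomm⟩ := exists_section_forall_commute hΩ (finite_range_conj_pow hn hxf) <| by
    rintro _ ⟨i, rfl⟩
    simp [-map_pow]
  have hσx : ∀ i : ℕ, Commute (σ x.right) (MulAut.conj (x ^ i) (inl f)) := by
    refine fun i => hcomm x ?_ _ ⟨i, rfl⟩
    rintro _ ⟨i, rfl⟩
    exact ⟨i + 1, by simp only [pow_succ', map_mul, MulAut.mul_apply]; rfl⟩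
  obtain ⟨q, hq⟩ := exists_mul_inv_eq_inl (hσ x.right).symm
  have hfq : (f * q) ^ n = q ^ n := by
    refine inl_injective (φ := freeGroupAction H Ω) ?_
    have hpow := mul_pow_mul_inv_pow_eq_of_conj_pow_eq (conj_pow_eq_conj_mul_inv_pow hσx) n
    rw [hq, ← hf, inv_mul_cancel_right, ← hxy, mul_inv_cancel, hf] at hpow
    rw [map_pow, map_pow, map_mul, ← mul_inv_eq_one, ← hpow]
  have hf1 : f = 1 := mul_eq_right.mp (pow_left_injective hn hfq)
  exact (mul_inv_eq_one.mp (by rw [hf, hf1, map_one])).symm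

theorem commute_inl_of_commute_inl [IsMulTorsionFree (PermSemidirect H Ω)]
    {g : PermSemidirect H Ω} {q r : FreeGroup Ω} (hr : r ≠ 1) (hg : Commute g (inl r))
    (hq : Commute q r) : Commute g (inl q) := by
  obtain ⟨m, n, hn, hqr⟩ := exists_zpow_eq_zpow_of_commute hq hr
  refine commute_of_commute_zpow hn ?_
  rw [← map_zpow, hqr, map_zpow]
  exact hg.zpow_right m

theorem commute_of_commute_inl [IsMulTorsionFree H] (hΩ : IsolatedStabilizers H Ω)
    {r : FreeGroup Ω} (hr : r ≠ 1) {a b : PermSemidirect H Ω} (hab : Commute a.right b.right)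
    (ha : Commute a (inl r)) (hb : Commute b (inl r)) : Commute a b := by
  have := isMulTorsionFree hΩ
  obtain ⟨σ, hσ, hcomm⟩ :=
    exists_section_forall_commute hΩ (Set.finite_singleton (inl r)) (by simp)
  have hdecomp : ∀ x : PermSemidirect H Ω, Commute x (inl r) → ∃ q : FreeGroup Ω,
      x = inl q * σ x.right ∧ Commute q r ∧ Commute (σ x.right) (inl r) := by
    intro x hx
    have hσx : Commute (σ x.right) (inl r) :=
      hcomm x (by simpa using mul_inv_eq_of_eq_mul hx.eq) _ rfl
    obtain ⟨q, hq⟩ := exists_mul_inv_eq_inl (hσ x.right).symm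
    have hqr : Commute (inl q : PermSemidirect H Ω) (inl r) := hq ▸ hx.mul_left hσx.inv_left
    exact ⟨q, by rw [← hq, inv_mul_cancel_right], inl_injective (by simpa using hqr.eq), hσx⟩
  obtain ⟨q, hqa, hqr, hσa⟩ := hdecomp a ha
  obtain ⟨q', hqb, hqr', hσb⟩ := hdecomp b hb
  have hqq' : Commute (inl q : PermSemidirect H Ω) (inl q') :=
    commute_inl_of_commute_inl hr (hqr.map inl) hqr'
  rw [hqa, hqb]
  exact (hqq'.mul_right (commute_inl_of_commute_inl hr hσb hqr).symm).mul_left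
    ((commute_inl_of_commute_inl hr hσa hqr').mul_right (hab.map σ))

theorem solvableSubgroupsAbelian [IsMulTorsionFree H] (hΩ : IsolatedStabilizers H Ω)
    (hH : SolvableSubgroupsAbelian H) : SolvableSubgroupsAbelian (PermSemidirect H Ω) := by
  intro S hS a ha b hb
  have := isMulTorsionFree hΩ
  have hab : Commute a.right b.right :=
    hH _ (isSolvable_subgroup_map rightHom S) _ (S.mem_map_of_mem rightHom ha)
      _ (S.mem_map_of_mem rightHom hb)
  let N : Subgroup (FreeGroup Ω) := S.comap inl
  have hinj : Function.Injective (inl.subgroupComap S : N →* S) :=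
    fun x y hxy => Subtype.ext (inl_injective (congrArg Subtype.val hxy))
  have : Group.IsSolvable N := Group.isSolvable_of_isSolvable_injective hinj
  obtain ⟨r, hr⟩ := (Subgroup.isCyclic_iff_exists_zpowers_eq_top N).mp
    (isCyclic_of_isFreeGroup_of_isSolvable N)
  rcases eq_or_ne r 1 with rfl | hr1
  · have hright : ⁅a, b⁆.right = 1 := by
      rw [← rightHom_eq_right, map_commutatorElement, commutatorElement_eq_one_iff_commute]
      exact hab
    have hmem : ⁅a, b⁆.left ∈ N := by
      rw [Subgroup.mem_comap, ← eq_inl_left hright]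
      exact S.mul_mem (S.mul_mem (S.mul_mem ha hb) (S.inv_mem ha)) (S.inv_mem hb)
    rw [← hr, Subgroup.zpowers_one_eq_bot, Subgroup.mem_bot] at hmem
    rw [← commutatorElement_eq_one_iff_commute, eq_inl_left hright, hmem, map_one]
  · have hconj : ∀ s ∈ S, s * inl r * s⁻¹ ∈ Subgroup.zpowers (inl r) := by
      intro s hs
      have hrS : inl r ∈ S := (hr ▸ Subgroup.mem_zpowers r : r ∈ N)
      rw [← MonoidHom.map_zpowers, hr, conj_inl]
      refine Subgroup.mem_map_of_mem _ ?_
      rw [Subgroup.mem_comap, ← conj_inl]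
      exact S.mul_mem (S.mul_mem hs hrS) (S.inv_mem hs)
    have hcomm : ∀ s ∈ S, Commute s (inl r) := fun s hs =>
      commute_of_conj_mem_zpowers (hconj s hs) (by simpa using hconj s⁻¹ (S.inv_mem hs))
    exact commute_of_commute_inl hΩ hr1 hab (hcomm a ha) (hcomm b hb)

end PermSemidirect

end PermSemidirect

section CosetSemidirect

open SemidirectProduct

variable {G K : Type*} [Group G] [Group K] {L : Subgroup K}

theorem isolatedStabilizers_quotient (hL : ∀ (x : K) (n : ℕ), n ≠ 0 → x ^ n ∈ L → x ∈ L) :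
    IsolatedStabilizers K (K ⧸ L) := by
  intro h n ω hn hω
  induction ω using QuotientGroup.induction_on with
  | H g =>
    have hstab (k : K) : k • (g : K ⧸ L) = g ↔ g⁻¹ * k * g ∈ L := by
      rw [eq_comm, MulAction.Quotient.smul_coe, smul_eq_mul, QuotientGroup.eq, mul_assoc]
    rw [hstab] at hω ⊢
    refine hL _ n hn ?_
    have hpow := conj_pow (a := g⁻¹) (b := h) (i := n)
    rw [inv_inv] at hpow
    rwa [hpow]

namespace PermSemidirect

variable (L) in
/-- The basis element at the trivial coset. The group `PermSemidirect K (K ⧸ L)` is the HNN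
extension of `K` by a stable letter centralising `L`, and this element is that letter. -/
def stableLetter : PermSemidirect K (K ⧸ L) := inl (FreeGroup.of ((1 : K) : K ⧸ L))

theorem commute_inr_stableLetter {g : K} (hg : g ∈ L) : Commute (inr g) (stableLetter L) := by
  refine commute_inr_inl ?_
  rw [FreeGroup.map.of, MulAction.toPerm_apply, MulAction.Quotient.smul_coe, smul_eq_mul]
  exact congrArg FreeGroup.of (QuotientGroup.eq.mpr (by simpa using hg))

theorem conj_eq_conj_of_inv_mul_mem {f : K →* G} {t : G} (h : ∀ g ∈ L, Commute (f g) t) {a b : K}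
    (hab : a⁻¹ * b ∈ L) : MulAut.conj (f a) t = MulAut.conj (f b) t := by
  have hfix : MulAut.conj (f (a⁻¹ * b)) t = t := mul_inv_eq_of_eq_mul (h _ hab).eq
  rw [← mul_inv_cancel_left a b, map_mul f, map_mul MulAut.conj, MulAut.mul_apply, hfix]

/-- The homomorphism out of `PermSemidirect K (K ⧸ L)` that extends `f : K →* G` and takes
`stableLetter L` to `t`. -/
def liftStableLetter (f : K →* G) (t : G) (h : ∀ g ∈ L, Commute (f g) t) :
    PermSemidirect K (K ⧸ L) →* G :=
  SemidirectProduct.lift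
    (FreeGroup.lift <| Quotient.lift (fun g => MulAut.conj (f g) t) fun _ _ hab =>
      conj_eq_conj_of_inv_mul_mem h (QuotientGroup.leftRel_apply.mp hab))
    f fun g => by
      ext ω
      induction ω using QuotientGroup.induction_on with
      | H a =>
        change FreeGroup.lift _ (FreeGroup.map _ (FreeGroup.of _)) =
          MulAut.conj (f g) (FreeGroup.lift _ (FreeGroup.of _))
        rw [FreeGroup.map.of, FreeGroup.lift_apply_of, FreeGroup.lift_apply_of]
        change MulAut.conj (f (g * a)) t = MulAut.conj (f g) (MulAut.conj (f a) t)
        rw [map_mul, map_mul, MulAut.mul_apply]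

variable {f : K →* G} {t : G} (h : ∀ g ∈ L, Commute (f g) t)

theorem liftStableLetter_inr (g : K) : liftStableLetter f t h (inr g) = f g :=
  SemidirectProduct.lift_inr ..

theorem liftStableLetter_stableLetter : liftStableLetter f t h (stableLetter L) = t := by
  rw [liftStableLetter, stableLetter, SemidirectProduct.lift_inl, FreeGroup.lift_apply_of]
  change MulAut.conj (f 1) t = t
  rw [map_one, map_one, MulAut.one_apply]

end PermSemidirect

end CosetSemidirect

namespace Raag

variable {V : Type*} {Γ : SimpleGraph V}

theorem commute_of {u v : V} (h : Γ.Adj u v) :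
    Commute (PresentedGroup.of u : Raag Γ) (PresentedGroup.of v) :=
  commutatorElement_eq_one_iff_commute.mp <|
    PresentedGroup.one_of_mem (rels := raagRels Γ) ⟨u, v, h, rfl⟩

/-- The homomorphism out of a partially commutative group with prescribed values on vertices. -/
def lift {G : Type*} [Group G] (f : V → G) (hf : ∀ u v, Γ.Adj u v → Commute (f u) (f v)) :
    Raag Γ →* G :=
  PresentedGroup.toGroup (f := f) <| by
    rintro _ ⟨u, v, h, rfl⟩
    simpa [← commutatorElement_def, commutatorElement_eq_one_iff_commute] using hf u v h

theorem lift_of {G : Type*} [Group G] (f : V → G) (hf : ∀ u v, Γ.Adj u v → Commute (f u) (f v))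
    (v : V) : lift f hf (PresentedGroup.of v) = f v :=
  PresentedGroup.toGroup.of _

theorem commute_map_of_forall_commute_map_of {G : Type*} [Group G] {f : Raag Γ →* G} {t : G}
    (h : ∀ v, Commute (f (PresentedGroup.of v)) t) (x : Raag Γ) : Commute (f x) t :=
  Subgroup.mem_centralizer_singleton_iff.mp <|
    PresentedGroup.generated_by _ ((Subgroup.centralizer {t}).comap f)
      (fun v => Subgroup.mem_centralizer_singleton_iff.mpr (h v)) x

variable (Γ) in
/-- The canonical homomorphism from the partially commutative group of an induced subgraph. -/
def incl (A : Set V) : Raag (Γ.induce A) →* Raag Γ :=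
  lift (fun w => PresentedGroup.of w.1) fun _ _ h => commute_of h

theorem incl_of {A : Set V} (w : A) :
    incl Γ A (PresentedGroup.of w) = PresentedGroup.of (w : V) :=
  lift_of ..

open scoped Classical in
variable (Γ) in
/-- The retraction onto the partially commutative group of the subgraph induced on `A` that kills
the vertices outside `A`. -/
noncomputable def retract (A : Set V) : Raag Γ →* Raag (Γ.induce A) :=
  lift (fun v => if hv : v ∈ A then PresentedGroup.of ⟨v, hv⟩ else 1) fun u v h => by
    by_cases hu : u ∈ A <;> by_cases hv : v ∈ A <;> simp only [hu, hv, dite_true, dite_false]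
    · exact commute_of h
    all_goals simp

theorem retract_of_mem {A : Set V} {v : V} (hv : v ∈ A) :
    retract Γ A (PresentedGroup.of v) = PresentedGroup.of ⟨v, hv⟩ := by
  rw [retract, lift_of, dif_pos hv]

theorem retract_of_notMem {A : Set V} {v : V} (hv : v ∉ A) :
    retract Γ A (PresentedGroup.of v) = 1 := by
  rw [retract, lift_of, dif_neg hv]

theorem retract_incl {A : Set V} (x : Raag (Γ.induce A)) : retract Γ A (incl Γ A x) = x := by
  suffices h : (retract Γ A).comp (incl Γ A) = MonoidHom.id _ from DFunLike.congr_fun h x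
  ext w
  rw [MonoidHom.comp_apply, incl_of, retract_of_mem w.2, MonoidHom.id_apply]

theorem mem_range_incl_of_pow_mem [IsMulTorsionFree (Raag Γ)] {A : Set V} {x : Raag Γ} {n : ℕ}
    (hn : n ≠ 0) (hx : x ^ n ∈ (incl Γ A).range) : x ∈ (incl Γ A).range := by
  obtain ⟨y, hy⟩ := hx
  refine ⟨retract Γ A x, pow_left_injective hn ?_⟩
  change incl Γ A (retract Γ A x) ^ n = x ^ n
  rw [← map_pow, ← map_pow, ← hy, retract_incl]

theorem incl_retract_mk (A : Set V) (z : FreeGroup V) :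
    incl Γ A (retract Γ A (PresentedGroup.mk _ z)) = PresentedGroup.mk _ (freeRetract A z) := by
  suffices h : ((incl Γ A).comp (retract Γ A)).comp (PresentedGroup.mk _) =
      (PresentedGroup.mk _).comp (freeRetract A) from DFunLike.congr_fun h z
  ext v
  change incl Γ A (retract Γ A (PresentedGroup.of v)) = _
  by_cases hv : v ∈ A
  · rw [retract_of_mem hv, incl_of, MonoidHom.comp_apply, freeRetract_of_mem hv]
    rfl
  · rw [retract_of_notMem hv, map_one, MonoidHom.comp_apply, freeRetract_of_notMem hv, map_one]

theorem exists_finset_incl_retract_eq_self (x : Raag Γ) :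
    ∃ A : Finset V, incl Γ A (retract Γ A x) = x := by
  obtain ⟨z, rfl⟩ := PresentedGroup.mk_surjective _ x
  obtain ⟨A, hA⟩ := exists_finset_freeRetract_eq_self z
  exact ⟨A, by rw [incl_retract_mk, hA]⟩

section Vertex

open SemidirectProduct

variable (Γ) (v : V)

/-- The subgroup generated by the neighbours of `v` in the partially commutative group of the graph
with `v` removed. -/
def linkSubgroup : Subgroup (Raag (Γ.induce {v}ᶜ)) :=
  (incl (Γ.induce {v}ᶜ) {w | Γ.Adj w v}).range

variable {v} in
theorem of_mem_linkSubgroup {w : ({v}ᶜ : Set V)} (hw : Γ.Adj w v) :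
    PresentedGroup.of w ∈ linkSubgroup Γ v :=
  ⟨PresentedGroup.of ⟨w, hw⟩, incl_of _⟩

variable {Γ v} in
theorem commute_incl_of_mem_linkSubgroup {g : Raag (Γ.induce {v}ᶜ)} (hg : g ∈ linkSubgroup Γ v) :
    Commute (incl Γ {v}ᶜ g) (PresentedGroup.of v) := by
  obtain ⟨x, rfl⟩ := hg
  refine commute_map_of_forall_commute_map_of (f := (incl Γ {v}ᶜ).comp (incl _ _)) (fun w => ?_) x
  rw [MonoidHom.comp_apply, incl_of, incl_of]
  exact commute_of w.2

open scoped Classical in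
/-- The partially commutative group of `Γ` as an HNN extension of that of `Γ` with `v` removed,
where `v` is the stable letter. -/
noncomputable def toPermSemidirect : Raag Γ →* PermSemidirect (Raag (Γ.induce {v}ᶜ))
    (Raag (Γ.induce {v}ᶜ) ⧸ linkSubgroup Γ v) :=
  lift (fun w => if hw : w ∈ ({v}ᶜ : Set V) then inr (PresentedGroup.of ⟨w, hw⟩)
      else PermSemidirect.stableLetter _) fun u w huw => by
    have hadj : ∀ {w : V} (hw : w ∈ ({v}ᶜ : Set V)), Γ.Adj w v →
        Commute (inr (PresentedGroup.of ⟨w, hw⟩))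
          (PermSemidirect.stableLetter (linkSubgroup Γ v)) :=
      fun hw hwv => PermSemidirect.commute_inr_stableLetter (of_mem_linkSubgroup Γ hwv)
    by_cases hu : u ∈ ({v}ᶜ : Set V) <;> by_cases hw : w ∈ ({v}ᶜ : Set V) <;>
      simp only [hu, hw, dite_true, dite_false]
    · exact (commute_of (Γ := Γ.induce {v}ᶜ) (u := ⟨u, hu⟩) (v := ⟨w, hw⟩) huw).map inr
    · obtain rfl := Set.notMem_compl_iff.mp hw
      exact hadj hu huw
    · obtain rfl := Set.notMem_compl_iff.mp hu
      exact (hadj hw huw.symm).symm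
    · rfl

theorem toPermSemidirect_injective : Function.Injective (toPermSemidirect Γ v) := by
  let g := PermSemidirect.liftStableLetter (incl Γ {v}ᶜ) (PresentedGroup.of v)
    fun _ hg => commute_incl_of_mem_linkSubgroup hg
  suffices h : g.comp (toPermSemidirect Γ v) = MonoidHom.id _ from
    Function.LeftInverse.injective (g := g) (DFunLike.congr_fun h)
  ext w
  rw [MonoidHom.comp_apply, toPermSemidirect, lift_of, MonoidHom.id_apply]
  by_cases hw : w ∈ ({v}ᶜ : Set V)
  · rw [dif_pos hw, PermSemidirect.liftStableLetter_inr, incl_of]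
  · rw [dif_neg hw, PermSemidirect.liftStableLetter_stableLetter, Set.notMem_compl_iff.mp hw]

theorem isMulTorsionFree_and_solvableSubgroupsAbelian_of_induce_compl
    (h : IsMulTorsionFree (Raag (Γ.induce {v}ᶜ)) ∧
      SolvableSubgroupsAbelian (Raag (Γ.induce {v}ᶜ))) :
    IsMulTorsionFree (Raag Γ) ∧ SolvableSubgroupsAbelian (Raag Γ) := by
  obtain ⟨htf, hab⟩ := h
  have hiso : IsolatedStabilizers (Raag (Γ.induce {v}ᶜ))
      (Raag (Γ.induce {v}ᶜ) ⧸ linkSubgroup Γ v) :=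
    isolatedStabilizers_quotient fun _ _ hn hx => mem_range_incl_of_pow_mem hn hx
  have := PermSemidirect.isMulTorsionFree hiso
  have hinj := toPermSemidirect_injective Γ v
  exact ⟨hinj.isMulTorsionFree _,
    (PermSemidirect.solvableSubgroupsAbelian hiso hab).of_injective hinj⟩

end Vertex

theorem isMulTorsionFree_and_solvableSubgroupsAbelian [Finite V] :
    IsMulTorsionFree (Raag Γ) ∧ SolvableSubgroupsAbelian (Raag Γ) := by
  induction hn : Nat.card V using Nat.strong_induction_on generalizing V with
  | h n ih =>
    cases isEmpty_or_nonempty V with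
    | inl =>
      have : Subsingleton (Raag Γ) := (PresentedGroup.mk_surjective (raagRels Γ)).subsingleton
      exact ⟨inferInstance, fun _ _ _ _ _ _ => Subsingleton.elim _ _⟩
    | inr hV =>
      obtain ⟨v⟩ := hV
      refine isMulTorsionFree_and_solvableSubgroupsAbelian_of_induce_compl Γ v (ih _ ?_ rfl)
      exact hn ▸ Finite.card_subtype_lt (x := v) (by simp)

variable (Γ) in
theorem solvableSubgroupsAbelian : SolvableSubgroupsAbelian (Raag Γ) := by
  refine .of_forall_exists_hom fun x hx => ?_
  obtain ⟨A, hA⟩ := exists_finset_incl_retract_eq_self x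
  refine ⟨_, _, retract Γ A, isMulTorsionFree_and_solvableSubgroupsAbelian.2, fun h => hx ?_⟩
  rw [← hA, h, map_one]

end Raag

theorem FullyResidually.residually {H G : Type*} [Group H] [Group G] (h : FullyResidually H G) :
    Residually H G := fun g hg => by
  simpa using h {g} (by simpa using hg)

theorem solvable_subgroup_of_limit_group_is_abelian_general
    {V G : Type*} (Γ : SimpleGraph V) [Group G] (hG : Residually (Raag Γ) G)
    (S : Subgroup G) (hS : Group.IsSolvable S) :
    ∀ a b : S, a * b = b * a := by
  have hab : SolvableSubgroupsAbelian G := .of_forall_exists_hom fun g hg =>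
    (hG g hg).elim fun φ hφ => ⟨_, _, φ, Raag.solvableSubgroupsAbelian Γ, hφ⟩
  exact fun a b => Subtype.ext (hab S hS a a.2 b b.2)

theorem solvable_subgroup_of_limit_group_is_abelian
    {V : Type} [Fintype V] (Γ : SimpleGraph V)
    (G : Type) [Group G] (hG : IsLimitGroupOver (Raag Γ) G)
    (S : Subgroup G) (hS : IsSolvable S) :
    ∀ a b : S, a * b = b * a :=
  solvable_subgroup_of_limit_group_is_abelian_general Γ hG.2.residually S hS
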